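/- Let f : ℝ^m → ℝ be continuously differentiable and suppose (w*, λ*, μ*) satisfies the first-order KKT conditions of the simplex-constrained problem min_{w ∈ Δ^{m-1}} f(w): ∇f(w*) + λ*𝟏 − μ* = 0, Σᵢ wᵢ* = 1, wᵢ* ≥ 0, μᵢ* ≥ 0, and μᵢ* wᵢ* = 0 for all i. Then the point z* defined by zᵢ* = √(wᵢ*) satisfies ‖z*‖₂ = 1 and the first-order stationarity condition of the sphere-constrained problem min_{‖z‖₂=1} f(z ⊙ z) with Lagrange multiplier γ* = λ*, namely 2 diag(z*) ∇f(z* ⊙ z*) + 2γ* z* = 0. -/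

import Mathlib

/-- The componentwise squaring map `z ↦ z ⊙ z`. -/
noncomputable def hadamardSq {m : ℕ} (z : EuclideanSpace ℝ (Fin m)) :
    EuclideanSpace ℝ (Fin m) :=
  WithLp.toLp 2 (fun i => z i * z i)

/-- If `(w*, λ*, μ*)` satisfies the first-order KKT conditions of the
simplex-constrained problem `min_{w ∈ Δ} f(w)`, then `z*` with `zᵢ* = √(wᵢ*)`
lies on the unit sphere and satisfies the first-order stationarity condition
`2 diag(z*) ∇f(z* ⊙ z*) + 2γ* z* = 0` of the sphere problem with `γ* = λ*`. -/
theorem simplex_kkt_to_sphere_stationarity (m : ℕ)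
    (f : EuclideanSpace ℝ (Fin m) → ℝ) (hf : ContDiff ℝ 1 f)
    (w : EuclideanSpace ℝ (Fin m)) (lam : ℝ) (mu : EuclideanSpace ℝ (Fin m))
    (hstat : ∀ i, gradient f w i + lam - mu i = 0)
    (hsum : ∑ i, w i = 1) (hnn : ∀ i, 0 ≤ w i)
    (hmu : ∀ i, 0 ≤ mu i) (hcomp : ∀ i, mu i * w i = 0)
    (z : EuclideanSpace ℝ (Fin m)) (hz : ∀ i, z i = Real.sqrt (w i)) :
    ‖z‖ = 1 ∧
    ∀ i, 2 * z i * gradient f (hadamardSq z) i + 2 * lam * z i = 0 := by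
  have hw : hadamardSq z = w := by
    ext i
    simp [hadamardSq, hz, Real.mul_self_sqrt (hnn i)]
  refine ⟨?_, ?_⟩
  · rw [EuclideanSpace.norm_eq]
    have h : ∑ i, ‖z i‖ ^ 2 = 1 := by
      rw [← hsum]
      refine Finset.sum_congr rfl fun i _ => ?_
      rw [Real.norm_eq_abs, sq_abs, hz, Real.sq_sqrt (hnn i)]
    rw [h, Real.sqrt_one]
  · intro i
    rw [hw]
    have h1 : mu i * z i = 0 := by
      rcases mul_eq_zero.mp (hcomp i) with h | h
      · rw [h, zero_mul]
      · rw [hz, h, Real.sqrt_zero, mul_zero]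
    linear_combination 2 * z i * hstat i + 2 * h1
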